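/- arXiv:1703.06528 — 3 statements merged into one kernel-verified Lean document; each statement's English description precedes it below -/
import Mathlib

section
/- Let X be a measurable space, Y ⊆ ℝ closed, P a probability measure on X × Y with marginal P^X, and L : Y × ℝ → [0,∞) a measurable loss function that is Lipschitz continuous with constant |L|₁. Let F be a set of measurable functions X → ℝ with F ⊆ L¹(P^X) such that F is dense in L¹(P^X). Then the infimum of the shifted risk over all measurable functions with P-integrable shifted loss equals the infimum over F: inf { R_{L⋆,P}(f) : f : X → ℝ measurable, (x,y) ↦ L(y,f(x)) − L(y,0) P-integrable } = inf { R_{L⋆,P}(f) : f ∈ F }. -/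
open MeasureTheory

/-!
The shifted risk is Lipschitz continuous on `L¹(P^X)`, so density of `F` puts the risk of every
integrable function in the closure of the set of risks attained on `F`. An arbitrary measurable `f`
with integrable shifted loss is cut off to zero outside sets increasing to `X` on which `f` is
integrable. Since the shifted loss of the zero function vanishes, the risk of the cut-off function
is the integral of the shifted loss of `f` over the cut-off set, and these integrals converge to the
risk of `f`. Thus both sets of risks have the same closure, hence the same infimum.
-/

open Filter Function Set
open scoped NNReal Topology

theorem csInf_eq_csInf_of_subset_of_subset_closure {α : Type*}
    [ConditionallyCompleteLinearOrder α] [TopologicalSpace α] [ClosedIciTopology α] {s t : Set α}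
    (hst : s ⊆ t) (hts : t ⊆ closure s) : sInf t = sInf s := by
  obtain rfl | hs := s.eq_empty_or_nonempty
  · rw [subset_empty_iff.mp (hts.trans closure_empty.subset)]
  by_cases hbdd : BddBelow s
  · have isGLB : IsGLB t (sInf s) :=
      (isGLB_iff_of_subset_of_subset_closure hst hts).1 (isGLB_csInf hs hbdd)
    exact isGLB.csInf_eq (hs.mono hst)
  · rw [csInf_of_not_bddBelow hbdd, csInf_of_not_bddBelow (mt (BddBelow.mono hst) hbdd)]

theorem exists_monotone_integrableOn_iUnion_eq_univ {X E : Type*} [MeasurableSpace X]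
    [NormedAddCommGroup E] [MeasurableSpace E] [OpensMeasurableSpace E] [SecondCountableTopology E]
    (μ : Measure X) [SigmaFinite μ] {f : X → E} (hf : Measurable f) :
    ∃ s : ℕ → Set X, Monotone s ∧ (∀ n, MeasurableSet (s n)) ∧ (∀ n, IntegrableOn f (s n) μ) ∧
      ⋃ n, s n = univ := by
  obtain ⟨s, hs, hs_univ⟩ := exists_spanning_measurableSet_le hf.nnnorm μ
  have integrableOn (n : ℕ) : IntegrableOn f (s n) μ :=
    Measure.integrableOn_of_bounded (hs n).2.1.ne hf.aestronglyMeasurable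
      (ae_restrict_of_forall_mem (hs n).1 fun x hx => mod_cast (hs n).2.2 x hx)
  exact ⟨accumulate s, monotone_accumulate, fun n => .biUnion (to_countable _) fun i _ => (hs i).1,
    fun n => (integrableOn_finite_biUnion (finite_Iic n)).2 fun i _ => integrableOn i,
    iUnion_accumulate.trans hs_univ⟩

section ShiftedRisk

variable {X Z E : Type*} [NormedAddCommGroup E] {L : X × Z → E → ℝ} {C : ℝ≥0} {f g : X → E}

/-- The shifted loss `L⋆(x, y, f x) = L(x, y, f x) - L(x, y, 0)` of a predictor `f`, as a function
of the observation `(x, y)`; the loss may also depend on the input `x`. -/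
def shiftedLoss (L : X × Z → E → ℝ) (f : X → E) (p : X × Z) : ℝ :=
  L p (f p.1) - L p 0

theorem shiftedLoss_indicator (s : Set X) :
    shiftedLoss L (s.indicator f) = (Prod.fst ⁻¹' s).indicator (shiftedLoss L f) := by
  ext p
  by_cases hp : p.1 ∈ s <;> simp [shiftedLoss, hp]

theorem norm_shiftedLoss_sub_le {p : X × Z} (hL : LipschitzWith C (L p)) (f g : X → E) :
    ‖shiftedLoss L f p - shiftedLoss L g p‖ ≤ C * ‖f p.1 - g p.1‖ := by
  simpa only [shiftedLoss, sub_sub_sub_cancel_right] using hL.norm_sub_le (f p.1) (g p.1)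

variable [MeasurableSpace X] [MeasurableSpace Z] {P : Measure (X × Z)}

/-- The shifted risk `R_{L⋆,P}(f)`, the mean of the shifted loss of `f`. As a Bochner integral it is
`0` when the shifted loss is not integrable. -/
noncomputable def shiftedRisk (P : Measure (X × Z)) (L : X × Z → E → ℝ) (f : X → E) : ℝ :=
  ∫ p, shiftedLoss L f p ∂P

theorem dist_shiftedRisk_le (hLip : ∀ᵐ p ∂P, LipschitzWith C (L p))
    (hf : Integrable (shiftedLoss L f) P) (hg : Integrable (shiftedLoss L g) P)
    (hfg : Integrable (f - g) P.fst) :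
    dist (shiftedRisk P L f) (shiftedRisk P L g) ≤ C * ∫ x, ‖f x - g x‖ ∂P.fst := by
  calc dist (shiftedRisk P L f) (shiftedRisk P L g)
      = ‖∫ p, (shiftedLoss L f p - shiftedLoss L g p) ∂P‖ := by
        rw [integral_sub hf hg, dist_eq_norm, shiftedRisk, shiftedRisk]
    _ ≤ ∫ p, C * ‖f p.1 - g p.1‖ ∂P :=
        norm_integral_le_of_norm_le ((hfg.comp_measurable measurable_fst).norm.const_mul _)
          (hLip.mono fun _ hp => norm_shiftedLoss_sub_le hp f g)
    _ = C * ∫ x, ‖f x - g x‖ ∂P.fst := by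
        rw [integral_const_mul]
        congr 1
        exact (integral_map measurable_fst.aemeasurable hfg.norm.aestronglyMeasurable).symm

theorem tendsto_shiftedRisk_indicator {s : ℕ → Set X} (hs_mono : Monotone s)
    (hs : ∀ n, MeasurableSet (s n)) (hs_univ : ⋃ n, s n = univ)
    (hf : Integrable (shiftedLoss L f) P) :
    Tendsto (fun n => shiftedRisk P L ((s n).indicator f)) atTop (𝓝 (shiftedRisk P L f)) := by
  have iUnion_preimage : ⋃ n, (Prod.fst ⁻¹' s n : Set (X × Z)) = univ := by
    rw [← preimage_iUnion, hs_univ, preimage_univ]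
  simpa only [shiftedRisk, shiftedLoss_indicator, integral_indicator (measurable_fst (hs _)),
    iUnion_preimage, setIntegral_univ] using
    tendsto_setIntegral_of_monotone (fun n => measurable_fst (hs n))
      (fun _ _ hmn => preimage_mono (hs_mono hmn)) hf.integrableOn

variable [MeasurableSpace E] {F : Set (X → E)}

theorem measurable_shiftedLoss (hL : Measurable (uncurry L)) (hf : Measurable f) :
    Measurable (shiftedLoss L f) :=
  (hL.comp (measurable_id.prodMk (hf.comp measurable_fst))).sub
    (hL.comp (measurable_id.prodMk measurable_const))

theorem integrable_shiftedLoss (hL : Measurable (uncurry L))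
    (hLip : ∀ᵐ p ∂P, LipschitzWith C (L p)) (hf : Measurable f) (hfi : Integrable f P.fst) :
    Integrable (shiftedLoss L f) P := by
  refine ((hfi.comp_measurable measurable_fst).norm.const_mul (C : ℝ)).mono'
    (measurable_shiftedLoss hL hf).aestronglyMeasurable (hLip.mono fun p hp => ?_)
  simpa [shiftedLoss] using norm_shiftedLoss_sub_le hp f 0

theorem shiftedRisk_mem_closure_of_integrable (hL : Measurable (uncurry L))
    (hLip : ∀ᵐ p ∂P, LipschitzWith C (L p)) (hFmeas : ∀ f ∈ F, Measurable f)
    (hFint : ∀ f ∈ F, Integrable f P.fst) (hg : Measurable g) (hgi : Integrable g P.fst)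
    (hgF : ∀ ε : ℝ, 0 < ε → ∃ f ∈ F, ∫ x, ‖f x - g x‖ ∂P.fst < ε) :
    shiftedRisk P L g ∈ closure (shiftedRisk P L '' F) := by
  refine Metric.mem_closure_iff.2 fun ε hε => ?_
  obtain ⟨δ, hδ, hCδ⟩ := exists_pos_mul_lt hε (C : ℝ)
  obtain ⟨f, hf, hfg⟩ := hgF δ hδ
  refine ⟨_, mem_image_of_mem _ hf, ?_⟩
  calc dist (shiftedRisk P L g) (shiftedRisk P L f)
      = dist (shiftedRisk P L f) (shiftedRisk P L g) := dist_comm _ _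
    _ ≤ C * ∫ x, ‖f x - g x‖ ∂P.fst :=
        dist_shiftedRisk_le hLip (integrable_shiftedLoss hL hLip (hFmeas f hf) (hFint f hf))
          (integrable_shiftedLoss hL hLip hg hgi) ((hFint f hf).sub hgi)
    _ ≤ C * δ := by gcongr
    _ < ε := hCδ

theorem shiftedRisk_mem_closure [OpensMeasurableSpace E] [SecondCountableTopology E]
    [SigmaFinite P.fst] (hL : Measurable (uncurry L)) (hLip : ∀ᵐ p ∂P, LipschitzWith C (L p))
    (hFmeas : ∀ f ∈ F, Measurable f) (hFint : ∀ f ∈ F, Integrable f P.fst)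
    (hFdense : ∀ g : X → E, Measurable g → Integrable g P.fst →
      ∀ ε : ℝ, 0 < ε → ∃ f ∈ F, ∫ x, ‖f x - g x‖ ∂P.fst < ε)
    (hf : Measurable f) (hfi : Integrable (shiftedLoss L f) P) :
    shiftedRisk P L f ∈ closure (shiftedRisk P L '' F) := by
  obtain ⟨s, hs_mono, hs, hfs, hs_univ⟩ := exists_monotone_integrableOn_iUnion_eq_univ P.fst hf
  refine isClosed_closure.mem_of_tendsto (tendsto_shiftedRisk_indicator hs_mono hs hs_univ hfi)
    (Eventually.of_forall fun n => ?_)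
  have indicator_meas : Measurable ((s n).indicator f) := hf.indicator (hs n)
  have indicator_int : Integrable ((s n).indicator f) P.fst := (hfs n).integrable_indicator (hs n)
  exact shiftedRisk_mem_closure_of_integrable hL hLip hFmeas hFint indicator_meas indicator_int
    (hFdense _ indicator_meas indicator_int)

theorem stmt8_general [OpensMeasurableSpace E] [SecondCountableTopology E] [SigmaFinite P.fst]
    (hL : Measurable (uncurry L)) (hLip : ∀ᵐ p ∂P, LipschitzWith C (L p))
    (hFmeas : ∀ f ∈ F, Measurable f) (hFint : ∀ f ∈ F, Integrable f P.fst)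
    (hFdense : ∀ g : X → E, Measurable g → Integrable g P.fst →
      ∀ ε : ℝ, 0 < ε → ∃ f ∈ F, ∫ x, ‖f x - g x‖ ∂P.fst < ε) :
    sInf (shiftedRisk P L '' {f | Measurable f ∧ Integrable (shiftedLoss L f) P}) =
      sInf (shiftedRisk P L '' F) := by
  refine csInf_eq_csInf_of_subset_of_subset_closure (image_mono fun f hf =>
    ⟨hFmeas f hf, integrable_shiftedLoss hL hLip (hFmeas f hf) (hFint f hf)⟩) ?_
  rintro _ ⟨f, ⟨hf, hfi⟩, rfl⟩
  exact shiftedRisk_mem_closure hL hLip hFmeas hFint hFdense hf hfi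

end ShiftedRisk

/-- For a Lipschitz continuous loss and a set `F` of measurable functions,
`F ⊆ L¹(P^X)` and dense in `L¹(P^X)`, the infimum of the shifted risk over all measurable
functions with `P`-integrable shifted loss equals the infimum over `F`. -/
theorem stmt8 {X : Type*} [MeasurableSpace X]
    (Y : Set ℝ) (hY : IsClosed Y)
    (P : Measure (X × ℝ)) [IsProbabilityMeasure P]
    (hPY : ∀ᵐ p ∂P, p.2 ∈ Y)
    (L : ℝ → ℝ → ℝ)
    (hLmeas : Measurable (Function.uncurry L))
    (hLnonneg : ∀ y ∈ Y, ∀ t : ℝ, 0 ≤ L y t)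
    (C : ℝ) (hC : 0 ≤ C)
    (hLip : ∀ y ∈ Y, ∀ s t : ℝ, |L y t - L y s| ≤ C * |t - s|)
    (F : Set (X → ℝ))
    (hFmeas : ∀ f ∈ F, Measurable f)
    (hFint : ∀ f ∈ F, Integrable f (P.map Prod.fst))
    (hFdense : ∀ g : X → ℝ, Measurable g → Integrable g (P.map Prod.fst) →
      ∀ ε : ℝ, 0 < ε → ∃ f ∈ F, ∫ x, |f x - g x| ∂(P.map Prod.fst) < ε) :
    sInf {r : ℝ | ∃ f : X → ℝ, Measurable f ∧
        Integrable (fun p : X × ℝ => L p.2 (f p.1) - L p.2 0) P ∧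
        r = ∫ p : X × ℝ, (L p.2 (f p.1) - L p.2 0) ∂P} =
      sInf {r : ℝ | ∃ f ∈ F, r = ∫ p : X × ℝ, (L p.2 (f p.1) - L p.2 0) ∂P} := by
  have hLip' : ∀ᵐ p ∂P, LipschitzWith ⟨C, hC⟩ (L p.2) :=
    hPY.mono fun p hp => .of_dist_le_mul fun s t => hLip p.2 hp t s
  have sInf_eq := stmt8_general (L := fun p => L p.2)
    (hLmeas.comp (measurable_snd.prodMap measurable_id)) hLip' hFmeas hFint hFdense
  simp only [image, mem_ofPred_eq, and_assoc, eq_comm (a := shiftedRisk _ _ _)] at sInf_eq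
  exact sInf_eq
end

section
/- Let X be a measurable space, Y ⊆ ℝ closed, P a probability measure on X × Y with marginal P^X, and L : Y × ℝ → [0,∞) a measurable loss function that is Lipschitz continuous with constant |L|₁ and satisfies L(y,y) = 0 for all y ∈ Y. If f : X → ℝ is measurable with ∫|f| dP^X < ∞ and (x,y) ↦ y is P-integrable, then (x,y) ↦ L(y,f(x)) is P-integrable and |∫ L(y,f(x)) dP(x,y)| ≤ |L|₁·( ∫ |f| dP^X + ∫ |y| dP(x,y) ). -/
open MeasureTheory

open scoped NNReal

section LipschitzLoss

variable {E F : Type*} [NormedAddCommGroup E] [NormedAddCommGroup F] {C : ℝ≥0}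

lemma norm_le_mul_norm_add_norm_of_lipschitzWith {g : E → F} (hg : LipschitzWith C g)
    {y : E} (hy : g y = 0) (t : E) : ‖g t‖ ≤ C * (‖t‖ + ‖y‖) :=
  calc
    ‖g t‖ = ‖g t - g y‖ := by rw [hy, sub_zero]
    _ ≤ C * ‖t - y‖ := hg.norm_sub_le t y
    _ ≤ C * (‖t‖ + ‖y‖) := by gcongr; exact norm_sub_le t y

variable {Ω : Type*} [MeasurableSpace Ω] {μ : Measure Ω} {Y : Set E} {L : E → E → F} {u v : Ω → E}

lemma ae_norm_loss_le (hvY : ∀ᵐ ω ∂μ, v ω ∈ Y) (hLzero : ∀ y ∈ Y, L y y = 0)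
    (hLip : ∀ y ∈ Y, LipschitzWith C (L y)) :
    ∀ᵐ ω ∂μ, ‖L (v ω) (u ω)‖ ≤ C * (‖u ω‖ + ‖v ω‖) := by
  filter_upwards [hvY] with ω hω
  exact norm_le_mul_norm_add_norm_of_lipschitzWith (hLip _ hω) (hLzero _ hω) (u ω)

lemma integrable_loss [MeasurableSpace E] [BorelSpace E] (hvY : ∀ᵐ ω ∂μ, v ω ∈ Y)
    (hLmeas : StronglyMeasurable (Function.uncurry L)) (hLzero : ∀ y ∈ Y, L y y = 0)
    (hLip : ∀ y ∈ Y, LipschitzWith C (L y)) (hu : Integrable u μ) (hv : Integrable v μ) :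
    Integrable (fun ω => L (v ω) (u ω)) μ :=
  have hloss : AEStronglyMeasurable (fun ω => L (v ω) (u ω)) μ :=
    hLmeas.aestronglyMeasurable.comp_aemeasurable (hv.aemeasurable.prodMk hu.aemeasurable)
  ((hu.norm.add hv.norm).const_mul (C : ℝ)).mono' hloss (ae_norm_loss_le hvY hLzero hLip)

lemma norm_integral_loss_le [NormedSpace ℝ F] (hvY : ∀ᵐ ω ∂μ, v ω ∈ Y)
    (hLzero : ∀ y ∈ Y, L y y = 0) (hLip : ∀ y ∈ Y, LipschitzWith C (L y))
    (hu : Integrable u μ) (hv : Integrable v μ) :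
    ‖∫ ω, L (v ω) (u ω) ∂μ‖ ≤ C * ((∫ ω, ‖u ω‖ ∂μ) + ∫ ω, ‖v ω‖ ∂μ) :=
  calc
    ‖∫ ω, L (v ω) (u ω) ∂μ‖ ≤ ∫ ω, C * (‖u ω‖ + ‖v ω‖) ∂μ :=
      norm_integral_le_of_norm_le ((hu.norm.add hv.norm).const_mul (C : ℝ))
        (ae_norm_loss_le hvY hLzero hLip)
    _ = C * ((∫ ω, ‖u ω‖ ∂μ) + ∫ ω, ‖v ω‖ ∂μ) := by
      rw [integral_const_mul, integral_add hu.norm hv.norm]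

theorem stmt12_general [NormedSpace ℝ F] [MeasurableSpace E] [BorelSpace E]
    {X : Type*} [MeasurableSpace X] {P : Measure (X × E)} (hPY : ∀ᵐ p ∂P, p.2 ∈ Y)
    (hLmeas : StronglyMeasurable (Function.uncurry L)) (hLzero : ∀ y ∈ Y, L y y = 0)
    (hLip : ∀ y ∈ Y, LipschitzWith C (L y)) {f : X → E}
    (hfint : Integrable f (P.map Prod.fst)) (hyint : Integrable (fun p : X × E => p.2) P) :
    Integrable (fun p : X × E => L p.2 (f p.1)) P ∧
    ‖∫ p : X × E, L p.2 (f p.1) ∂P‖ ≤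
      C * ((∫ x, ‖f x‖ ∂(P.map Prod.fst)) + ∫ p : X × E, ‖p.2‖ ∂P) := by
  have hf_fst : Integrable (fun p : X × E => f p.1) P := hfint.comp_measurable measurable_fst
  refine ⟨integrable_loss hPY hLmeas hLzero hLip hf_fst hyint, ?_⟩
  rw [integral_map measurable_fst.aemeasurable hfint.norm.aestronglyMeasurable]
  exact norm_integral_loss_le hPY hLzero hLip hf_fst hyint

end LipschitzLoss

/-- For a Lipschitz continuous loss `L` with `L(y,y) = 0` for all `y ∈ Y`, a
measurable `f` with `∫|f| dP^X < ∞` and `(x,y) ↦ y` `P`-integrable, the loss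
`(x,y) ↦ L(y,f(x))` is `P`-integrable and
`|∫ L(y,f(x)) dP| ≤ |L|₁·(∫|f| dP^X + ∫|y| dP)`. -/
theorem stmt12 {X : Type*} [MeasurableSpace X]
    (Y : Set ℝ) (hY : IsClosed Y)
    (P : Measure (X × ℝ)) [IsProbabilityMeasure P]
    (hPY : ∀ᵐ p ∂P, p.2 ∈ Y)
    (L : ℝ → ℝ → ℝ)
    (hLmeas : Measurable (Function.uncurry L))
    (hLnonneg : ∀ y ∈ Y, ∀ t : ℝ, 0 ≤ L y t)
    (hLzero : ∀ y ∈ Y, L y y = 0)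
    (C : ℝ) (hC : 0 ≤ C)
    (hLip : ∀ y ∈ Y, ∀ s t : ℝ, |L y t - L y s| ≤ C * |t - s|)
    (f : X → ℝ) (hf : Measurable f)
    (hfint : Integrable f (P.map Prod.fst))
    (hyint : Integrable (fun p : X × ℝ => p.2) P) :
    Integrable (fun p : X × ℝ => L p.2 (f p.1)) P ∧
    |∫ p : X × ℝ, L p.2 (f p.1) ∂P| ≤
      C * ((∫ x, |f x| ∂(P.map Prod.fst)) + ∫ p : X × ℝ, |p.2| ∂P) := by
  lift C to ℝ≥0 using hC
  exact stmt12_general hPY hLmeas.stronglyMeasurable hLzero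
    (fun y hy => .of_dist_le_mul fun s t => hLip y hy t s) hfint hyint
end

section
/- Let X be a measurable space, Y ⊆ ℝ closed, P a probability measure on X × Y, and L : Y × ℝ → [0,∞) a measurable loss function such that t ↦ L(y,t) is convex for every y ∈ Y. Let X = X_1 ∪ … ∪ X_B be a cover by measurable regions with measurable weights w_b : X → [0,1] satisfying Σ_b w_b = 1 and w_b = 0 off X_b, and let f_1,…,f_B : X → ℝ be measurable. For each b with P(X_b × Y) > 0 let P_b := P(X_b×Y)^{-1}·P|_{X_b×Y}. Then (with integrals of nonnegative functions taken in [0,∞]): ∫ L(y, Σ_{b=1}^B w_b(x)·f_b(x)) dP(x,y) ≤ Σ_{b=1}^B P(X_b × Y) · ∫ L(y, f_b(x)) dP_b(x,y). -/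
open MeasureTheory

/-! On `X_b × Y` the measure `P (X_b × Y) • P_b` is `P` itself, so the right-hand side is the sum of
the integrals of `L(y, f_b(x))` over the sets `X_b × Y`. Jensen's inequality at each point bounds
the loss of the aggregated predictor by `Σ_b w_b(x) · L(y, f_b(x))`; as `w_b ≤ 1` vanishes off
`X_b`, its `b`-th summand integrates to at most the integral of `L(y, f_b(x))` over `X_b × Y`. -/

section

open ProbabilityTheory
open scoped ENNReal NNReal

theorem measure_smul_cond {Ω : Type*} [MeasurableSpace Ω] {μ : Measure Ω} {s : Set Ω}
    (hs : μ s ≠ ∞) : μ s • μ[|s] = μ.restrict s := by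
  obtain h0 | h0 := eq_or_ne (μ s) 0
  · simp only [h0, zero_smul, Measure.restrict_eq_zero.mpr h0]
  · rw [ProbabilityTheory.cond, smul_smul, ENNReal.mul_inv_cancel h0 hs, one_smul]

theorem measure_mul_lintegral_cond {Ω : Type*} [MeasurableSpace Ω] {μ : Measure Ω} {s : Set Ω}
    (hs : μ s ≠ ∞) (g : Ω → ℝ≥0∞) : μ s * ∫⁻ ω, g ω ∂μ[|s] = ∫⁻ ω in s, g ω ∂μ := by
  rw [← smul_eq_mul, ← lintegral_smul_measure, measure_smul_cond hs]

theorem lintegral_mul_le_setLIntegral {Ω : Type*} [MeasurableSpace Ω] {μ : Measure Ω} {s : Set Ω}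
    {w : Ω → ℝ≥0∞} (hw : w ≤ᵐ[μ] s.indicator 1) (g : Ω → ℝ≥0∞) :
    ∫⁻ ω, w ω * g ω ∂μ ≤ ∫⁻ ω in s, g ω ∂μ :=
  calc ∫⁻ ω, w ω * g ω ∂μ
    _ ≤ ∫⁻ ω, s.indicator 1 ω * g ω ∂μ :=
        lintegral_mono_ae (hw.mono fun _ h => mul_le_mul_left h _)
    _ = ∫⁻ ω, s.indicator g ω ∂μ := by simp only [← Set.indicator_mul_left, Pi.one_apply, one_mul]
    _ ≤ ∫⁻ ω in s, g ω ∂μ := lintegral_indicator_le g s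

variable {ι E : Type*} [Fintype ι] [AddCommGroup E] [Module ℝ E] {C : Set E}

theorem coe_map_sum_smul_le {φ : E → ℝ≥0} (hφ : ConvexOn ℝ C (fun x => (φ x : ℝ)))
    {w : ι → ℝ} (hw : w ∈ stdSimplex ℝ ι) {x : ι → E} (hx : ∀ i, x i ∈ C) :
    (φ (∑ i, w i • x i) : ℝ≥0∞) ≤ ∑ i, ENNReal.ofReal (w i) * φ (x i) := by
  have jensen : (φ (∑ i, w i • x i) : ℝ) ≤ ∑ i, w i * φ (x i) :=
    hφ.map_sum_le (fun i _ => hw.1 i) hw.2 (fun i _ => hx i)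
  calc (φ (∑ i, w i • x i) : ℝ≥0∞)
    _ ≤ ENNReal.ofReal (∑ i, w i * φ (x i)) := by
        simpa only [ENNReal.ofReal_coe_nnreal] using ENNReal.ofReal_le_ofReal jensen
    _ = ∑ i, ENNReal.ofReal (w i * φ (x i)) :=
        ENNReal.ofReal_sum_of_nonneg fun i _ => mul_nonneg (hw.1 i) (φ (x i)).coe_nonneg
    _ = ∑ i, ENNReal.ofReal (w i) * φ (x i) := by
        simp only [ENNReal.ofReal_mul (hw.1 _), ENNReal.ofReal_coe_nnreal]

variable {Ω : Type*} [MeasurableSpace Ω] {μ : Measure Ω} {ℓ : Ω → E → ℝ≥0} {w : ι → Ω → ℝ}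
  {f : ι → Ω → E}

theorem lintegral_map_sum_smul_le (hℓ : ∀ᵐ ω ∂μ, ConvexOn ℝ C (fun x => (ℓ ω x : ℝ)))
    (hℓf : ∀ i, AEMeasurable (fun ω => ℓ ω (f i ω)) μ) (hfC : ∀ᵐ ω ∂μ, ∀ i, f i ω ∈ C)
    (hw : ∀ i, AEMeasurable (w i) μ) (hw_simplex : ∀ᵐ ω ∂μ, (w · ω) ∈ stdSimplex ℝ ι) :
    ∫⁻ ω, ℓ ω (∑ i, w i ω • f i ω) ∂μ ≤ ∑ i, ∫⁻ ω, ENNReal.ofReal (w i ω) * ℓ ω (f i ω) ∂μ := by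
  have jensen : ∀ᵐ ω ∂μ, (ℓ ω (∑ i, w i ω • f i ω) : ℝ≥0∞) ≤
      ∑ i, ENNReal.ofReal (w i ω) * ℓ ω (f i ω) := by
    filter_upwards [hℓ, hfC, hw_simplex] with ω hℓω hfω hwω
    exact coe_map_sum_smul_le hℓω hwω hfω
  calc ∫⁻ ω, ℓ ω (∑ i, w i ω • f i ω) ∂μ
    _ ≤ ∫⁻ ω, ∑ i, ENNReal.ofReal (w i ω) * ℓ ω (f i ω) ∂μ := lintegral_mono_ae jensen
    _ = ∑ i, ∫⁻ ω, ENNReal.ofReal (w i ω) * ℓ ω (f i ω) ∂μ :=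
        lintegral_finsetSum' _ fun i _ => (hw i).ennreal_ofReal.mul (hℓf i).coe_nnreal_ennreal

theorem stmt17_general (hℓ : ∀ᵐ ω ∂μ, ConvexOn ℝ C (fun x => (ℓ ω x : ℝ)))
    (hℓf : ∀ i, AEMeasurable (fun ω => ℓ ω (f i ω)) μ) (hfC : ∀ᵐ ω ∂μ, ∀ i, f i ω ∈ C)
    (hw : ∀ i, AEMeasurable (w i) μ) (hw_simplex : ∀ᵐ ω ∂μ, (w · ω) ∈ stdSimplex ℝ ι)
    {S : ι → Set Ω} (hS : ∀ i, μ (S i) ≠ ∞) (hwS : ∀ i, ∀ᵐ ω ∂μ, ω ∉ S i → w i ω = 0) :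
    ∫⁻ ω, ℓ ω (∑ i, w i ω • f i ω) ∂μ ≤ ∑ i, μ (S i) * ∫⁻ ω, ℓ ω (f i ω) ∂μ[|S i] := by
  have ofReal_weight_le (i : ι) :
      (fun ω => ENNReal.ofReal (w i ω)) ≤ᵐ[μ] (S i).indicator 1 := by
    filter_upwards [hw_simplex, hwS i] with ω hwω hwSω
    by_cases hω : ω ∈ S i
    · simpa only [Set.indicator_of_mem hω, Pi.one_apply, ENNReal.ofReal_le_one] using
        (mem_Icc_of_mem_stdSimplex hwω i).2
    · simp only [hwSω hω, ENNReal.ofReal_zero, zero_le]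
  calc ∫⁻ ω, ℓ ω (∑ i, w i ω • f i ω) ∂μ
    _ ≤ ∑ i, ∫⁻ ω, ENNReal.ofReal (w i ω) * ℓ ω (f i ω) ∂μ :=
        lintegral_map_sum_smul_le hℓ hℓf hfC hw hw_simplex
    _ ≤ ∑ i, ∫⁻ ω in S i, ℓ ω (f i ω) ∂μ :=
        Finset.sum_le_sum fun i _ => lintegral_mul_le_setLIntegral (ofReal_weight_le i) _
    _ = ∑ i, μ (S i) * ∫⁻ ω, ℓ ω (f i ω) ∂μ[|S i] := by
        simp only [measure_mul_lintegral_cond (hS _)]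

end

/-- For a convex loss `L`, a cover `X = X_1 ∪ … ∪ X_B` with weights `w_b` and
measurable `f_1,…,f_B : X → ℝ`, with `P_b` the normalized restriction of `P` to `X_b × Y`
(with integrals of the nonnegative loss taken in `[0,∞]`):
`∫ L(y, Σ_b w_b(x)·f_b(x)) dP ≤ Σ_b P(X_b × Y) · ∫ L(y, f_b(x)) dP_b`. -/
theorem stmt17 {X : Type*} [MeasurableSpace X]
    (Y : Set ℝ) (hY : IsClosed Y) (hYmeas : MeasurableSet Y)
    (P : Measure (X × ℝ)) [IsProbabilityMeasure P]
    (hPY : ∀ᵐ p ∂P, p.2 ∈ Y)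
    (L : ℝ → ℝ → ℝ)
    (hLmeas : Measurable (Function.uncurry L))
    (hLnonneg : ∀ y ∈ Y, ∀ t : ℝ, 0 ≤ L y t)
    (hLconv : ∀ y ∈ Y, ConvexOn ℝ Set.univ (fun t => L y t))
    (B : ℕ) (Xb : Fin B → Set X) (hXbmeas : ∀ b, MeasurableSet (Xb b))
    (hcover : (⋃ b, Xb b) = Set.univ)
    (w : Fin B → X → ℝ) (hwmeas : ∀ b, Measurable (w b))
    (hw01 : ∀ b x, w b x ∈ Set.Icc (0 : ℝ) 1)
    (hwsum : ∀ x, ∑ b, w b x = 1)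
    (hwzero : ∀ b x, x ∉ Xb b → w b x = 0)
    (f : Fin B → X → ℝ) (hf : ∀ b, Measurable (f b))
    (Pb : Fin B → Measure (X × ℝ))
    (hPb : ∀ b, Pb b = (P ((Xb b) ×ˢ Y))⁻¹ • P.restrict ((Xb b) ×ˢ Y)) :
    (∫⁻ p : X × ℝ, ENNReal.ofReal (L p.2 (∑ b, w b p.1 * f b p.1)) ∂P) ≤
      ∑ b, P ((Xb b) ×ˢ Y) *
        ∫⁻ p : X × ℝ, ENNReal.ofReal (L p.2 (f b p.1)) ∂(Pb b) := by
  obtain rfl : Pb = fun b => ProbabilityTheory.cond P (Xb b ×ˢ Y) := funext hPb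
  -- `ENNReal.ofReal r` unfolds to the coercion of `r.toNNReal`, hence this choice of `ℓ`.
  exact stmt17_general (C := Set.univ) (ℓ := fun (p : X × ℝ) t => (L p.2 t).toNNReal)
    (w := fun b (p : X × ℝ) => w b p.1) (f := fun b (p : X × ℝ) => f b p.1)
    (hℓ := hPY.mono fun p hp => (hLconv p.2 hp).congr fun t _ =>
      (Real.coe_toNNReal _ (hLnonneg p.2 hp t)).symm)
    (hℓf := fun b => (hLmeas.comp
      (measurable_snd.prodMk ((hf b).comp measurable_fst))).real_toNNReal.aemeasurable)
    (hfC := .of_forall fun _ _ => Set.mem_univ _)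
    (hw := fun b => ((hwmeas b).comp measurable_fst).aemeasurable)
    (hw_simplex := .of_forall fun p => ⟨fun b => (hw01 b p.1).1, hwsum p.1⟩)
    (hS := fun _ => measure_ne_top P _)
    (hwS := fun b => hPY.mono fun p hp hpS => hwzero b p.1 fun hx => hpS ⟨hx, hp⟩)
end
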